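/- arXiv:1811.11219 — 2 statements merged into one kernel-verified Lean document; each statement's English description precedes it below -/
import Mathlib

section
/- The map β₁ sending a partition λ with no repeated odd part to the sequence ζ with ζ_{2i−1} = ⌊(λ_i + 1)/2⌋ and ζ_{2i} = ⌊λ_i/2⌋ for all i ≥ 1 is a bijection from the set 𝒜 of partitions with no repeated odd part onto the set 𝒞 of partitions ζ satisfying ζ_{2i−1} − ζ_{2i} ≤ 1 for all i ≥ 1; its inverse sends ζ to the partition λ with λ_i = ζ_{2i−1} + ζ_{2i} for all i ≥ 1. Moreover, for all n, β₁ restricts to a bijection between partitions of n in 𝒜 and partitions of n in 𝒞. -/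
/-- A partition, modeled as a nonincreasing function `ℕ → ℕ` with only finitely many
nonzero terms. -/
def IsPartitionFun (f : ℕ → ℕ) : Prop :=
  (∀ i j, i ≤ j → f j ≤ f i) ∧ ∃ N, ∀ i, N ≤ i → f i = 0

/-- The sum of the parts of a partition. -/
noncomputable def partSum (f : ℕ → ℕ) : ℕ := ∑' i, f i

/-- `𝒜`: partitions with no repeated odd part. -/
def memA (f : ℕ → ℕ) : Prop :=
  IsPartitionFun f ∧ ∀ i j, i ≠ j → Odd (f i) → f i ≠ f j

/-- `𝒞`: partitions `ζ` satisfying `ζ_{2i−1} − ζ_{2i} ≤ 1` for all `i ≥ 1`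
(zero-based: `ζ(2i) − ζ(2i+1) ≤ 1`). -/
def memC (f : ℕ → ℕ) : Prop :=
  IsPartitionFun f ∧ ∀ i, f (2 * i) ≤ f (2 * i + 1) + 1

/-- The map `β₁`, sending `λ` to `ζ` with `ζ_{2i−1} = ⌊(λ_i + 1)/2⌋` and
`ζ_{2i} = ⌊λ_i/2⌋` (zero-based indexing). -/
def beta1 (lam : ℕ → ℕ) : ℕ → ℕ :=
  fun n => if n % 2 = 0 then (lam (n / 2) + 1) / 2 else lam (n / 2) / 2

/-- The inverse map, sending `ζ` to `λ` with `λ_i = ζ_{2i−1} + ζ_{2i}`. -/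
def beta1Inv (zeta : ℕ → ℕ) : ℕ → ℕ :=
  fun i => zeta (2 * i) + zeta (2 * i + 1)

theorem beta1_even (f : ℕ → ℕ) (k : ℕ) : beta1 f (2 * k) = (f k + 1) / 2 := by
  have h1 : 2 * k % 2 = 0 := by omega
  have h2 : 2 * k / 2 = k := by omega
  simp only [beta1, h1, h2, if_true]

theorem beta1_odd (f : ℕ → ℕ) (k : ℕ) : beta1 f (2 * k + 1) = f k / 2 := by
  have h1 : ¬ ((2 * k + 1) % 2 = 0) := by omega
  have h2 : (2 * k + 1) / 2 = k := by omega
  simp only [beta1, h1, h2, if_false]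

theorem beta1_memC (f : ℕ → ℕ) (hf : memA f) : memC (beta1 f) := by
  obtain ⟨⟨hm, N, hN⟩, ho⟩ := hf
  refine ⟨⟨?_, 2 * N, ?_⟩, ?_⟩
  · have h : Antitone (beta1 f) := by
      apply antitone_nat_of_succ_le
      intro n
      obtain ⟨k, rfl | rfl⟩ : ∃ k, n = 2 * k ∨ n = 2 * k + 1 := ⟨n / 2, by omega⟩
      · rw [beta1_even, beta1_odd]; omega
      · rw [show 2 * k + 1 + 1 = 2 * (k + 1) by ring, beta1_even, beta1_odd]
        have h1 := hm k (k + 1) (by omega)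
        have h2 := ho k (k + 1) (by omega)
        rw [Nat.odd_iff] at h2
        by_cases h3 : f k % 2 = 1
        · have := h2 h3
          omega
        · omega
    intro i j hij
    exact h hij
  · intro i hi
    have h0 := hN (i / 2) (by omega)
    simp [beta1, h0]
  · intro i
    rw [beta1_even, beta1_odd]; omega

theorem beta1Inv_memA (g : ℕ → ℕ) (hg : memC g) : memA (beta1Inv g) := by
  obtain ⟨⟨hm, N, hN⟩, hc⟩ := hg
  have key : ∀ i j, i < j → Odd (beta1Inv g i) → beta1Inv g i ≠ beta1Inv g j := by
    intro i j hij h1 h2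
    rw [Nat.odd_iff] at h1
    simp only [beta1Inv] at h1 h2
    have a := hm (2 * i) (2 * i + 1) (by omega)
    have b := hm (2 * i + 1) (2 * j) (by omega)
    have c := hm (2 * j) (2 * j + 1) (by omega)
    omega
  refine ⟨⟨?_, N, ?_⟩, ?_⟩
  · intro i j hij
    exact Nat.add_le_add (hm _ _ (by omega)) (hm _ _ (by omega))
  · intro i hi
    simp [beta1Inv, hN (2 * i) (by omega), hN (2 * i + 1) (by omega)]
  · intro i j hij h1 h2
    rcases lt_or_gt_of_ne hij with h | h
    · exact key i j h h1 h2
    · exact key j i h (h2 ▸ h1) h2.symm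

theorem beta1Inv_beta1 (f : ℕ → ℕ) : beta1Inv (beta1 f) = f := by
  funext i
  simp only [beta1Inv, beta1_even, beta1_odd]
  omega

theorem beta1_beta1Inv (g : ℕ → ℕ) (hg : memC g) : beta1 (beta1Inv g) = g := by
  obtain ⟨⟨hm, -⟩, hc⟩ := hg
  funext n
  obtain ⟨k, rfl | rfl⟩ : ∃ k, n = 2 * k ∨ n = 2 * k + 1 := ⟨n / 2, by omega⟩
  all_goals
    have a := hm (2 * k) (2 * k + 1) (by omega)
    have b := hc k
    simp only [beta1_even, beta1_odd, beta1Inv]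
    omega

theorem partSum_beta1Inv (g : ℕ → ℕ) (hg : IsPartitionFun g) :
    partSum (beta1Inv g) = partSum g := by
  obtain ⟨-, N, hN⟩ := hg
  have h1 : Summable (fun k => g (2 * k)) :=
    summable_of_ne_finset_zero (s := Finset.range N) (by
      intro b hb
      exact hN _ (by simp at hb; omega))
  have h2 : Summable (fun k => g (2 * k + 1)) :=
    summable_of_ne_finset_zero (s := Finset.range N) (by
      intro b hb
      exact hN _ (by simp at hb; omega))
  simp only [partSum, beta1Inv]
  rw [h1.tsum_add h2, tsum_even_add_odd h1 h2]

theorem partSum_beta1 (f : ℕ → ℕ) (hf : memA f) : partSum (beta1 f) = partSum f := by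
  rw [← partSum_beta1Inv _ (beta1_memC f hf).1, beta1Inv_beta1]

/-- `β₁` is a bijection from `𝒜` (partitions with no repeated odd part) onto `𝒞`
(partitions with `ζ_{2i−1} − ζ_{2i} ≤ 1` for all `i`), with inverse
`ζ ↦ (ζ_{2i−1} + ζ_{2i})_i`; moreover it preserves the number partitioned,
hence restricts to a bijection between partitions of `n` in `𝒜` and in `𝒞`
for every `n`. -/
theorem beta_one_bijection :
    (∀ f, memA f → memC (beta1 f)) ∧
    (∀ g, memC g → memA (beta1Inv g)) ∧
    (∀ f, memA f → beta1Inv (beta1 f) = f) ∧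
    (∀ g, memC g → beta1 (beta1Inv g) = g) ∧
    (∀ f, memA f → partSum (beta1 f) = partSum f) ∧
    (∀ n : ℕ, Set.BijOn beta1 {f | memA f ∧ partSum f = n} {g | memC g ∧ partSum g = n}) := by
  refine ⟨beta1_memC, beta1Inv_memA, fun f _ => beta1Inv_beta1 f, beta1_beta1Inv,
    partSum_beta1, fun n => ⟨?_, ?_, ?_⟩⟩
  · rintro f ⟨hf, hn⟩
    exact ⟨beta1_memC f hf, (partSum_beta1 f hf).trans hn⟩
  · intro f _ f' _ h
    rw [← beta1Inv_beta1 f, ← beta1Inv_beta1 f', h]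
  · rintro g ⟨hg, hn⟩
    exact ⟨beta1Inv g, ⟨beta1Inv_memA g hg, (partSum_beta1Inv g hg.1).trans hn⟩,
      beta1_beta1Inv g hg⟩
end

section
/- A partition μ has only odd parts, each occurring with even multiplicity, if and only if its conjugate ξ = μ′ satisfies: every term ξ_i is even, and ξ_{2i} = ξ_{2i+1} for all i ≥ 1. Consequently, conjugation is a bijection between the set ℬ of partitions of n with only odd parts of even multiplicity and the set 𝒟 of partitions ξ of n with all terms even satisfying ξ_{2i} = ξ_{2i+1} for all i ≥ 1. -/
/-- The conjugate partition: its zero-based `i`-th term is the number of parts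
that are at least `i+1`. -/
noncomputable def conjFun (f : ℕ → ℕ) : ℕ → ℕ := fun i => {j | i + 1 ≤ f j}.ncard

/-- `ℬ`: partitions having only odd parts, each occurring with even multiplicity. -/
noncomputable def memB (f : ℕ → ℕ) : Prop :=
  IsPartitionFun f ∧ (∀ i, 0 < f i → Odd (f i)) ∧
    ∀ k, 0 < k → Even {i | f i = k}.ncard

/-- `𝒟`: partitions `ξ` with every term even and `ξ_{2i} = ξ_{2i+1}` for all `i ≥ 1`
(zero-based: `ξ(2i+1) = ξ(2i+2)`). -/
def memD (f : ℕ → ℕ) : Prop :=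
  IsPartitionFun f ∧ (∀ i, Even (f i)) ∧ ∀ i, f (2 * i + 1) = f (2 * i + 2)

lemma lt_conjFun {f : ℕ → ℕ} (hf : IsPartitionFun f) (i j : ℕ) :
    j < conjFun f i ↔ i < f j := by
  classical
  obtain ⟨hm, N, hN⟩ := hf
  have hex : ∃ c, f c ≤ i := ⟨N, by rw [hN N le_rfl]; exact Nat.zero_le _⟩
  have hset : {j | i + 1 ≤ f j} = ((Finset.range (Nat.find hex) : Finset ℕ) : Set ℕ) := by
    ext j
    simp only [Set.mem_setOf_eq, Finset.coe_range, Set.mem_Iio, Nat.lt_find_iff]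
    constructor
    · intro h m hmj
      have := hm m j hmj
      omega
    · intro h
      have := h j le_rfl
      omega
  have hc : conjFun f i = Nat.find hex := by
    unfold conjFun
    rw [hset, Set.ncard_coe_finset, Finset.card_range]
  have h2 : j ∈ {j | i + 1 ≤ f j} ↔ j < Nat.find hex := by
    rw [hset]; simp
  rw [hc, ← h2]
  exact Iff.rfl

lemma conjFun_part {f : ℕ → ℕ} (hf : IsPartitionFun f) : IsPartitionFun (conjFun f) := by
  refine ⟨fun i j hij => ?_, f 0, fun i hi => ?_⟩
  · by_contra! h
    have h1 := (lt_conjFun hf j _).1 h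
    have h2 := (lt_conjFun hf i _).2 (lt_of_le_of_lt hij h1)
    omega
  · by_contra h
    have h1 := (lt_conjFun hf i 0).1 (by omega)
    omega

lemma conjFun_conjFun {f : ℕ → ℕ} (hf : IsPartitionFun f) : conjFun (conjFun f) = f := by
  funext i
  refine eq_of_forall_lt_iff fun j => ?_
  rw [lt_conjFun (conjFun_part hf), lt_conjFun hf]

lemma partSum_conjFun {f : ℕ → ℕ} (hf : IsPartitionFun f) :
    partSum (conjFun f) = partSum f := by
  obtain ⟨hm', M, hM⟩ := conjFun_part hf
  obtain ⟨hm, N, hN⟩ := id hf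
  have e1 : partSum f = ∑ j ∈ Finset.range N, f j :=
    tsum_eq_sum fun b hb => hN b (by simpa using hb)
  have e2 : partSum (conjFun f) = ∑ j ∈ Finset.range M, conjFun f j :=
    tsum_eq_sum fun b hb => hM b (by simpa using hb)
  have c1 : ∀ j, f j = ∑ i ∈ Finset.range M, if i < f j then 1 else 0 := by
    intro j
    rw [← Finset.card_filter]
    have : (Finset.range M).filter (fun i => i < f j) = Finset.range (f j) := by
      ext i
      simp only [Finset.mem_filter, Finset.mem_range, and_iff_right_iff_imp]
      intro h
      by_contra! h2
      have := (lt_conjFun hf i j).2 h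
      rw [hM i h2] at this
      omega
    rw [this, Finset.card_range]
  have c2 : ∀ i, conjFun f i = ∑ j ∈ Finset.range N, if i < f j then 1 else 0 := by
    intro i
    rw [← Finset.card_filter]
    have : (Finset.range N).filter (fun j => i < f j) = Finset.range (conjFun f i) := by
      ext j
      simp only [Finset.mem_filter, Finset.mem_range, lt_conjFun hf, and_iff_right_iff_imp]
      intro h
      by_contra! h2
      rw [hN j h2] at h
      omega
    rw [this, Finset.card_range]
  rw [e1, e2, Finset.sum_congr rfl fun j _ => c1 j, Finset.sum_congr rfl fun j _ => c2 j,
    Finset.sum_comm]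

lemma mult_eq {f : ℕ → ℕ} (hf : IsPartitionFun f) (k : ℕ) :
    {i | f i = k + 1}.ncard = conjFun f k - conjFun f (k + 1) := by
  have : {i | f i = k + 1} =
      ((Finset.Ico (conjFun f (k + 1)) (conjFun f k) : Finset ℕ) : Set ℕ) := by
    ext j
    have h1 := lt_conjFun hf k j
    have h2 := lt_conjFun hf (k + 1) j
    simp only [Set.mem_setOf_eq, Finset.coe_Ico, Set.mem_Ico]
    omega
  rw [this, Set.ncard_coe_finset, Nat.card_Ico]

lemma memB_iff {f : ℕ → ℕ} (hf : IsPartitionFun f) :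
    memB f ↔ ((∀ i, Even (conjFun f i)) ∧
        ∀ i, conjFun f (2 * i + 1) = conjFun f (2 * i + 2)) := by
  obtain ⟨hm', M, hM⟩ := conjFun_part hf
  constructor
  · rintro ⟨-, hodd, hmul⟩
    refine ⟨fun i => ?_, fun i => ?_⟩
    · have key : ∀ d i, M ≤ i + d → Even (conjFun f i) := by
        intro d
        induction d with
        | zero => intro i hi; rw [hM i hi]; exact Even.zero
        | succ d ih =>
          intro i hi
          have h1 := ih (i + 1) (by omega)
          have h2 := hmul (i + 1) (by omega)
          rw [mult_eq hf] at h2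
          have h3 := hm' i (i + 1) (by omega)
          have := h2.add h1
          rwa [Nat.sub_add_cancel h3] at this
      exact key M i (by omega)
    · refine eq_of_forall_lt_iff fun j => ?_
      rw [lt_conjFun hf, lt_conjFun hf]
      have := hodd j
      constructor
      · intro h
        obtain ⟨m, hm⟩ := this (by omega)
        omega
      · omega
  · rintro ⟨hev, heq⟩
    refine ⟨hf, fun j hj => ?_, fun k hk => ?_⟩
    · by_contra h
      obtain ⟨m, hm⟩ := Nat.not_odd_iff_even.1 h
      obtain ⟨i, rfl⟩ : ∃ i, m = i + 1 := ⟨m - 1, by omega⟩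
      have h1 := (lt_conjFun hf (2 * i + 1) j).2 (by omega)
      rw [heq, lt_conjFun hf] at h1
      omega
    · obtain ⟨i, rfl⟩ : ∃ i, k = i + 1 := ⟨k - 1, by omega⟩
      rw [mult_eq hf]
      exact (hev i).tsub (hev (i + 1))

/-- A partition `μ` has only odd parts, each of even multiplicity, if and only if its
conjugate `ξ = μ′` has every term even and satisfies `ξ_{2i} = ξ_{2i+1}` for all
`i ≥ 1`.  Consequently conjugation is a bijection between the set `ℬ` of partitions of
`n` with only odd parts of even multiplicity and the set `𝒟` of partitions `ξ` of `n`
with all terms even satisfying `ξ_{2i} = ξ_{2i+1}` for all `i ≥ 1`. -/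
theorem conj_B_iff_D :
    (∀ mu : ℕ → ℕ, IsPartitionFun mu →
      (memB mu ↔ ((∀ i, Even (conjFun mu i)) ∧
        ∀ i, conjFun mu (2 * i + 1) = conjFun mu (2 * i + 2)))) ∧
    (∀ n : ℕ, Set.BijOn conjFun {f | memB f ∧ partSum f = n}
      {g | memD g ∧ partSum g = n}) := by
  refine ⟨fun mu hmu => memB_iff hmu, fun n => ⟨?_, ?_, ?_⟩⟩
  · rintro f ⟨hf, hs⟩
    exact ⟨⟨conjFun_part hf.1, (memB_iff hf.1).1 hf⟩, (partSum_conjFun hf.1).trans hs⟩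
  · rintro f ⟨hf, -⟩ g ⟨hg, -⟩ h
    rw [← conjFun_conjFun hf.1, h, conjFun_conjFun hg.1]
  · rintro g ⟨hg, hs⟩
    refine ⟨conjFun g, ⟨(memB_iff (conjFun_part hg.1)).2 ?_, (partSum_conjFun hg.1).trans hs⟩,
      conjFun_conjFun hg.1⟩
    rw [conjFun_conjFun hg.1]
    exact hg.2
end
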